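/- Optimal posterior convergence for the spike and Cauchy slab: there exist constants C > 0, N_0 > 0 and c_0, c_1 > 0 such that, for any n ≥ N_0 and any s_n satisfying c_1·log²n ≤ s_n ≤ c_0·n, sup_{θ_0 ∈ ℓ0[s_n]} E_{θ_0} ∫ ‖θ − θ_0‖² dΠ_{ĥα}(θ | X) ≤ C · 2·s_n·log(n/s_n). Moreover, if one only assumes s_n ≤ c_0·n, the same statement holds with the bound replaced by C·2·s_n·log(n/s_n) + C·log³n. -/

import Mathlib

/-!
Statement 2: optimal posterior convergence rate for the empirical Bayes
spike and Cauchy slab posterior.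
-/

open MeasureTheory Real Set

noncomputable section

/-- Standard Cauchy density. -/
def cauchyDen (x : ℝ) : ℝ := (Real.pi * (1 + x ^ 2))⁻¹


/-- Standard normal density. -/
def phi (x : ℝ) : ℝ := Real.exp (-x ^ 2 / 2) / Real.sqrt (2 * Real.pi)

/-- Standard Laplace density. -/
def lapDen (x : ℝ) : ℝ := Real.exp (-|x|) / 2

/-- Convolution `g = φ * γ`. -/
def conv (γ : ℝ → ℝ) (x : ℝ) : ℝ := ∫ u, phi (x - u) * γ u

/-- Posterior weight `a(x) = α g(x) / ((1-α) φ(x) + α g(x))`. -/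
def aWt (γ : ℝ → ℝ) (α x : ℝ) : ℝ :=
  α * conv γ x / ((1 - α) * phi x + α * conv γ x)

/-- Density of the single-coordinate posterior with respect to `volume + δ₀`:
the point mass `1 - a(x)` at `0`, and the continuous part `a(x) γ_x`. -/
def coordDen (γ : ℝ → ℝ) (α x u : ℝ) : ℝ :=
  if u = 0 then 1 - aWt γ α x else aWt γ α x * (phi (x - u) * γ u / conv γ x)

/-- Single-coordinate posterior `(1 - a(x)) δ₀ + a(x) G_x`. -/
def coordPost (γ : ℝ → ℝ) (α x : ℝ) : Measure ℝ :=
  (volume + Measure.dirac (0 : ℝ)).withDensity fun u => ENNReal.ofReal (coordDen γ α x u)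

/-- The spike and slab posterior `Π_α[· | X]` on `ℝⁿ`, for a fixed weight `α`. -/
def post (γ : ℝ → ℝ) (n : ℕ) (α : ℝ) (X : Fin n → ℝ) : Measure (Fin n → ℝ) :=
  Measure.pi fun i => coordPost γ α (X i)

/-- Law `P_θ` of the data `X`, `X_i = θ_i + ε_i` with `ε_i` i.i.d. `N(0,1)`. -/
def Pdata (n : ℕ) (θ : Fin n → ℝ) : Measure (Fin n → ℝ) :=
  Measure.pi fun i => ProbabilityTheory.gaussianReal (θ i) 1

/-- The class `ℓ₀[s]` of `s`-sparse vectors. -/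
def ell0 (n s : ℕ) : Set (Fin n → ℝ) := {θ | Nat.card {i : Fin n // θ i ≠ 0} ≤ s}

/-- Log-marginal likelihood `ℓ_n(α; X)`. -/
def logMarg (γ : ℝ → ℝ) {n : ℕ} (α : ℝ) (X : Fin n → ℝ) : ℝ :=
  ∑ i, Real.log ((1 - α) * phi (X i) + α * conv γ (X i))

/-- `0` is a median of the single-coordinate posterior distribution. -/
def medianZero (γ : ℝ → ℝ) (α x : ℝ) : Prop :=
  2⁻¹ ≤ coordPost γ α x (Set.Iic 0) ∧ 2⁻¹ ≤ coordPost γ α x (Set.Ici 0)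

/-- `t` is the posterior median threshold function: for each `α ∈ (0,1)`,
`t α > 0` and the posterior median at observation `x` is `0` iff `|x| ≤ t α`. -/
def IsThreshold (γ : ℝ → ℝ) (t : ℝ → ℝ) : Prop :=
  ∀ α ∈ Set.Ioo (0 : ℝ) 1, 0 < t α ∧ ∀ x : ℝ, (medianZero γ α x ↔ |x| ≤ t α)

/-- `hahat` is a marginal maximum likelihood empirical Bayes estimator of `α`,
with maximisation restricted to `[αn, 1]`. -/
def IsMMLE (γ : ℝ → ℝ) {n : ℕ} (αn : ℝ) (hahat : (Fin n → ℝ) → ℝ) : Prop :=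
  Measurable hahat ∧ ∀ X : Fin n → ℝ, hahat X ∈ Set.Icc αn 1 ∧
    ∀ α ∈ Set.Icc αn 1, logMarg γ α X ≤ logMarg γ (hahat X) X

/-- Expected posterior squared `L²`-moment
`E_{θ₀} ∫ ‖θ - θ₀‖² dΠ_{ĥα}(θ | X)` for the plug-in posterior. -/
def postRisk (γ : ℝ → ℝ) {n : ℕ} (hahat : (Fin n → ℝ) → ℝ) (θ0 : Fin n → ℝ) : ℝ :=
  ∫ X, (∫ θ, (∑ i, (θ i - θ0 i) ^ 2) ∂(post γ n (hahat X) X)) ∂(Pdata n θ0)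

/-! ### Part A: Gaussian and Cauchy integrals -/

lemma phi_pos (x : ℝ) : 0 < phi x := by unfold phi; positivity

lemma phi_eq_pdf (x u : ℝ) : phi (x - u) = ProbabilityTheory.gaussianPDFReal x 1 u := by
  unfold phi ProbabilityTheory.gaussianPDFReal
  rw [show (u - x) ^ 2 = (x - u) ^ 2 by ring]
  simp [div_eq_inv_mul]

lemma phi_eq_pdf0 (u : ℝ) : phi u = ProbabilityTheory.gaussianPDFReal 0 1 u := by
  rw [← phi_eq_pdf]; unfold phi; simp

lemma measurable_phi : Measurable phi := by unfold phi; fun_prop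

lemma continuous_phi : Continuous phi := by unfold phi; fun_prop

lemma phi_le_one (x : ℝ) : phi x ≤ 1 := by
  unfold phi
  rw [div_le_one (by positivity)]
  calc Real.exp (-x ^ 2 / 2) ≤ 1 := by
        apply Real.exp_le_one_iff.mpr; nlinarith [sq_nonneg x]
    _ ≤ √(2 * π) := by
        rw [Real.one_le_sqrt]; linarith [Real.pi_gt_three]

lemma cauchy_pos (x : ℝ) : 0 < cauchyDen x := by unfold cauchyDen; positivity

lemma measurable_cauchy : Measurable cauchyDen := by unfold cauchyDen; fun_prop

lemma cauchy_le (x : ℝ) : cauchyDen x ≤ 1 := by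
  unfold cauchyDen
  apply inv_le_one_of_one_le₀
  nlinarith [Real.pi_gt_three, sq_nonneg x]

lemma integrable_pow_phi (k : ℕ) : Integrable (fun z : ℝ => z ^ k * phi z) := by
  have h := integrable_rpow_mul_exp_neg_mul_sq (b := 1/2) (by norm_num) (s := (k:ℝ))
    (by have : (0:ℝ) ≤ k := Nat.cast_nonneg k
        linarith)
  have := h.div_const (√(2 * π))
  refine this.congr (Filter.Eventually.of_forall fun z => ?_)
  simp only [phi, Real.rpow_natCast]
  rw [mul_div_assoc, show -(1/2) * z ^ 2 = -z ^ 2 / 2 by ring]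

lemma integral_phi : ∫ z, phi z = 1 := by
  simp_rw [phi_eq_pdf0]
  exact ProbabilityTheory.integral_gaussianPDFReal_eq_one 0 one_ne_zero

lemma integrable_phi : Integrable phi := by simpa using integrable_pow_phi 0

lemma integral_gauss (f : ℝ → ℝ) :
    ∫ x, f x ∂(ProbabilityTheory.gaussianReal 0 1) = ∫ x, phi x * f x := by
  rw [ProbabilityTheory.integral_gaussianReal_eq_integral_smul one_ne_zero]
  simp_rw [phi_eq_pdf0, smul_eq_mul]

lemma integrable_gauss {f : ℝ → ℝ} (hf : Integrable (fun x => phi x * f x)) :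
    Integrable f (ProbabilityTheory.gaussianReal 0 1) := by
  rw [ProbabilityTheory.gaussianReal_of_var_ne_zero _ one_ne_zero,
    integrable_withDensity_iff_integrable_smul' (ProbabilityTheory.measurable_gaussianPDF _ _)
      (Filter.Eventually.of_forall fun _ => ProbabilityTheory.gaussianPDF_lt_top)]
  simpa [phi_eq_pdf0, ProbabilityTheory.toReal_gaussianPDF] using hf

lemma integral_id_phi : ∫ z, z * phi z = 0 := by
  have := ProbabilityTheory.integral_id_gaussianReal (μ := 0) (v := 1)
  rw [integral_gauss] at this
  simpa [mul_comm] using this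

lemma integral_sq_phi : ∫ z, z ^ 2 * phi z = 1 := by
  have := ProbabilityTheory.variance_fun_id_gaussianReal (μ := 0) (v := 1)
  rw [ProbabilityTheory.variance_eq_integral (by fun_prop),
    ProbabilityTheory.integral_id_gaussianReal, integral_gauss] at this
  simpa [mul_comm] using this

lemma integrable_conv (x : ℝ) : Integrable (fun u => phi (x - u) * cauchyDen u) := by
  refine (integrable_phi.comp_sub_left x).mono' ?_ (Filter.Eventually.of_forall fun u => ?_)
  · exact ((measurable_phi.comp (by fun_prop)).mul measurable_cauchy).aestronglyMeasurable
  · rw [Real.norm_of_nonneg (mul_nonneg (phi_pos _).le (cauchy_pos _).le)]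
    exact mul_le_of_le_one_right (phi_pos _).le (cauchy_le _)

lemma conv_lower (x : ℝ) : (π * (2 + x ^ 2))⁻¹ ≤ conv cauchyDen x := by
  unfold conv
  set m := 2 + x ^ 2 with hm
  have hmpos : 0 < m := by positivity
  have h0 := integrable_pow_phi 0
  have h1 := integrable_pow_phi 1
  have h2 := integrable_pow_phi 2
  simp only [pow_zero, one_mul, pow_one] at h0 h1
  let F : ℝ → ℝ := fun z => π⁻¹ * ((2 / m - (1 + x ^ 2) / m ^ 2) * phi z + (2 * x / m ^ 2) * (z * phi z)
      - (1 / m ^ 2) * (z ^ 2 * phi z))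
  have i1 := (h0.const_mul (2 / m - (1 + x ^ 2) / m ^ 2))
  have i2 := (h1.const_mul (2 * x / m ^ 2))
  have i3 := (h2.const_mul (1 / m ^ 2))
  have i12 : Integrable (fun z => (2 / m - (1 + x ^ 2) / m ^ 2) * phi z + (2 * x / m ^ 2) * (z * phi z)) :=
    i1.add i2
  have hF : Integrable F := (i12.sub i3).const_mul _
  have hFi : ∫ z, F z = (π * m)⁻¹ := by
    simp only [F]
    rw [integral_const_mul, integral_sub i12 i3, integral_add i1 i2, integral_const_mul,
      integral_const_mul, integral_const_mul, integral_phi, integral_id_phi, integral_sq_phi, mul_inv]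
    congr 1
    field_simp
    rw [hm]; ring
  rw [← hFi, ← integral_sub_left_eq_self F volume x]
  refine integral_mono (hF.comp_sub_left x) (integrable_conv x) fun u => ?_
  have key : 2 / m - (1 + u ^ 2) / m ^ 2 ≤ (1 + u ^ 2)⁻¹ := by
    have hu : 0 < 1 + u ^ 2 := by positivity
    rw [div_sub_div _ _ hmpos.ne' (by positivity), inv_eq_one_div, div_le_div_iff₀ (by positivity) hu]
    nlinarith [mul_nonneg hmpos.le (sq_nonneg (m - (1 + u ^ 2)))]
  have e : F (x - u) = phi (x - u) * (π⁻¹ * (2 / m - (1 + u ^ 2) / m ^ 2)) := by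
    simp only [F]; ring
  simp only
  rw [e]
  apply mul_le_mul_of_nonneg_left _ (phi_pos _).le
  unfold cauchyDen
  rw [mul_inv]
  exact mul_le_mul_of_nonneg_left key (by positivity)

lemma conv_pos (x : ℝ) : 0 < conv cauchyDen x :=
  lt_of_lt_of_le (by positivity) (conv_lower x)

lemma measurable_conv : Measurable (conv cauchyDen) := by
  have : StronglyMeasurable (fun p : ℝ × ℝ => phi (p.1 - p.2) * cauchyDen p.2) := by
    apply Measurable.stronglyMeasurable
    exact (measurable_phi.comp (by fun_prop)).mul (measurable_cauchy.comp measurable_snd)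
  exact this.integral_prod_right.measurable

lemma lintegral_conv_inner (x : ℝ) :
    ∫⁻ u, ENNReal.ofReal (phi (x - u) * cauchyDen u) = ENNReal.ofReal (conv cauchyDen x) := by
  unfold conv
  rw [ofReal_integral_eq_lintegral_ofReal (integrable_conv x)]
  exact Filter.Eventually.of_forall fun u => (mul_pos (phi_pos _) (cauchy_pos _)).le

lemma integrable_cauchy : Integrable cauchyDen := by
  have := integrable_inv_one_add_sq.const_mul π⁻¹
  refine this.congr (Filter.Eventually.of_forall fun z => ?_)
  simp [cauchyDen, mul_comm]

lemma integral_cauchy : ∫ x, cauchyDen x = 1 := by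
  unfold cauchyDen
  simp_rw [mul_inv]
  rw [integral_const_mul, integral_univ_inv_one_add_sq]
  field_simp

lemma lintegral_conv : ∫⁻ x, ENNReal.ofReal (conv cauchyDen x) = 1 := by
  simp_rw [← lintegral_conv_inner]
  rw [lintegral_lintegral_swap]
  · have : ∀ u, ∫⁻ x, ENNReal.ofReal (phi (x - u) * cauchyDen u) = ENNReal.ofReal (cauchyDen u) := by
      intro u
      rw [← ofReal_integral_eq_lintegral_ofReal ((integrable_phi.comp_sub_right u).mul_const _)]
      · rw [integral_mul_const, integral_sub_right_eq_self phi, integral_phi, one_mul]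
      · exact Filter.Eventually.of_forall fun u => (mul_pos (phi_pos _) (cauchy_pos _)).le
    simp_rw [this]
    rw [← ofReal_integral_eq_lintegral_ofReal integrable_cauchy, integral_cauchy]
    · simp
    · exact Filter.Eventually.of_forall fun u => (cauchy_pos _).le
  · apply Measurable.aemeasurable
    apply Measurable.ennreal_ofReal
    exact (measurable_phi.comp (by fun_prop)).mul (measurable_cauchy.comp measurable_snd)

lemma integrable_conv_fun : Integrable (conv cauchyDen) := by
  refine ⟨measurable_conv.aestronglyMeasurable, ?_⟩
  rw [hasFiniteIntegral_iff_ofReal (Filter.Eventually.of_forall fun x => (conv_pos x).le),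
    lintegral_conv]
  simp

lemma integral_conv : ∫ x, conv cauchyDen x = 1 := by
  rw [integral_eq_lintegral_of_nonneg_ae (Filter.Eventually.of_forall fun x => (conv_pos x).le)
    measurable_conv.aestronglyMeasurable, lintegral_conv]
  simp

/-- the ratio `g/φ` grows at least like `exp (x²/4)` -/
lemma ratio_lower (x : ℝ) : Real.exp (x ^ 2 / 4) / 8 * phi x ≤ conv cauchyDen x := by
  refine le_trans ?_ (conv_lower x)
  have hE := Real.add_one_le_exp (x ^ 2 / 4)
  unfold phi
  have h2 : Real.exp (-x ^ 2 / 2) = (Real.exp (x ^ 2 / 4))⁻¹ * (Real.exp (x ^ 2 / 4))⁻¹ := by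
    rw [← Real.exp_neg, ← Real.exp_add]; congr 1; ring
  rw [h2]
  set E := Real.exp (x ^ 2 / 4)
  have hEp : 0 < E := Real.exp_pos _
  have hs : π ≤ 2 * √(2 * π) := by
    have h : π / 2 ≤ √(2 * π) := by
      apply Real.le_sqrt_of_sq_le
      nlinarith [Real.pi_pos, Real.pi_lt_four]
    linarith
  have hsp : 0 < √(2 * π) := by positivity
  have e : E / 8 * (E⁻¹ * E⁻¹ / √(2 * π)) = (8 * E * √(2 * π))⁻¹ := by
    field_simp
  rw [e]
  apply inv_anti₀ (by positivity)
  have := Real.pi_pos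
  calc π * (2 + x ^ 2) ≤ π * (4 * E) := by gcongr; linarith
    _ = 4 * E * π := by ring
    _ ≤ 4 * E * (2 * √(2 * π)) := by gcongr
    _ = 8 * E * √(2 * π) := by ring

/-- second moment constant -/
def K4 : ℝ := 8 * ∫ z, (z ^ 2 * (1 + z ^ 2)) * phi z

lemma K4_nonneg : 0 ≤ K4 := by
  unfold K4
  exact mul_nonneg (by norm_num) (integral_nonneg fun z => mul_nonneg (by positivity) (phi_pos z).le)

lemma integrable_K4 : Integrable (fun z : ℝ => (z ^ 2 * (1 + z ^ 2)) * phi z) := by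
  refine ((integrable_pow_phi 2).add (integrable_pow_phi 4)).congr
    (Filter.Eventually.of_forall fun z => ?_)
  simp only [Pi.add_apply]; ring

lemma second_moment (x : ℝ) :
    ∫⁻ u, ENNReal.ofReal ((u - x) ^ 2 * (phi (x - u) * cauchyDen u)) ≤
      ENNReal.ofReal (K4 * conv cauchyDen x) := by
  have hpt : ∀ u : ℝ, (u - x) ^ 2 * (phi (x - u) * cauchyDen u) ≤
      4 * (π * (2 + x ^ 2))⁻¹ * (((x - u) ^ 2 * (1 + (x - u) ^ 2)) * phi (x - u)) := by
    intro u
    have h1 : cauchyDen u ≤ 4 * (π * (2 + x ^ 2))⁻¹ * (1 + (x - u) ^ 2) := by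
      unfold cauchyDen
      rw [mul_inv, mul_inv]
      have : (1 + u ^ 2)⁻¹ ≤ 4 * (2 + x ^ 2)⁻¹ * (1 + (x - u) ^ 2) := by
        have hu : 0 < 1 + u ^ 2 := by positivity
        have hx : 0 < 2 + x ^ 2 := by positivity
        rw [inv_eq_one_div, inv_eq_one_div, mul_one_div, div_mul_eq_mul_div, div_le_div_iff₀ hu hx]
        nlinarith [sq_nonneg (2 * u - x), mul_nonneg (sq_nonneg u) (sq_nonneg (x - u)), sq_nonneg (x-u), sq_nonneg u]
      calc π⁻¹ * (1 + u ^ 2)⁻¹ ≤ π⁻¹ * (4 * (2 + x ^ 2)⁻¹ * (1 + (x - u) ^ 2)) := by gcongr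
        _ = _ := by ring
    calc (u - x) ^ 2 * (phi (x - u) * cauchyDen u)
        ≤ (u - x) ^ 2 * (phi (x - u) * (4 * (π * (2 + x ^ 2))⁻¹ * (1 + (x - u) ^ 2))) := by
          gcongr
          exact (phi_pos _).le
      _ = _ := by ring
  calc _ ≤ ∫⁻ u, ENNReal.ofReal
        (4 * (π * (2 + x ^ 2))⁻¹ * (((x - u) ^ 2 * (1 + (x - u) ^ 2)) * phi (x - u))) :=
        lintegral_mono fun u => ENNReal.ofReal_le_ofReal (hpt u)
    _ = ENNReal.ofReal (∫ u, 4 * (π * (2 + x ^ 2))⁻¹ * (((x - u) ^ 2 * (1 + (x - u) ^ 2)) * phi (x - u))) := by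
        rw [ofReal_integral_eq_lintegral_ofReal ((integrable_K4.comp_sub_left x).const_mul _)]
        exact Filter.Eventually.of_forall fun u =>
          mul_nonneg (by positivity) (mul_nonneg (by positivity) (phi_pos _).le)
    _ ≤ _ := by
        apply ENNReal.ofReal_le_ofReal
        rw [integral_const_mul, integral_sub_left_eq_self (fun z : ℝ => (z ^ 2 * (1 + z ^ 2)) * phi z) volume x]
        have := mul_le_mul_of_nonneg_left (conv_lower x) K4_nonneg
        refine le_trans ?_ this
        unfold K4
        have h0 : 0 ≤ (π * (2 + x ^ 2))⁻¹ * ∫ z, (z ^ 2 * (1 + z ^ 2)) * phi z :=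
          mul_nonneg (by positivity) (integral_nonneg fun z => mul_nonneg (by positivity) (phi_pos z).le)
        nlinarith

/-! ### Part B: the single-coordinate posterior -/

lemma den_pos {α : ℝ} (h0 : 0 < α) (h1 : α ≤ 1) (x : ℝ) :
    0 < (1 - α) * phi x + α * conv cauchyDen x := by
  have := mul_pos h0 (conv_pos x)
  have := mul_nonneg (sub_nonneg.mpr h1) (phi_pos x).le
  linarith

lemma aWt_nonneg {α : ℝ} (h0 : 0 < α) (h1 : α ≤ 1) (x : ℝ) : 0 ≤ aWt cauchyDen α x :=
  div_nonneg (mul_pos h0 (conv_pos x)).le (den_pos h0 h1 x).le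

lemma one_sub_aWt {α : ℝ} (h0 : 0 < α) (h1 : α ≤ 1) (x : ℝ) :
    1 - aWt cauchyDen α x = (1 - α) * phi x / ((1 - α) * phi x + α * conv cauchyDen x) := by
  have := (den_pos h0 h1 x).ne'
  unfold aWt
  rw [eq_div_iff this, sub_mul, div_mul_cancel₀ _ this]
  ring

lemma one_sub_aWt_nonneg {α : ℝ} (h0 : 0 < α) (h1 : α ≤ 1) (x : ℝ) :
    0 ≤ 1 - aWt cauchyDen α x := by
  rw [one_sub_aWt h0 h1]
  exact div_nonneg (mul_nonneg (sub_nonneg.mpr h1) (phi_pos x).le) (den_pos h0 h1 x).le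

lemma measurable_slab (α x : ℝ) :
    Measurable fun u => aWt cauchyDen α x * (phi (x - u) * cauchyDen u / conv cauchyDen x) :=
  (((measurable_phi.comp (by fun_prop)).mul measurable_cauchy).div_const _).const_mul _

lemma measurable_coordDen (α x : ℝ) : Measurable (coordDen cauchyDen α x) := by
  unfold coordDen
  exact Measurable.ite (measurableSet_singleton 0) measurable_const (measurable_slab α x)

lemma lintegral_coordPost (α x : ℝ) {f : ℝ → ENNReal} (hf : Measurable f) :
    ∫⁻ u, f u ∂(coordPost cauchyDen α x) =
      ENNReal.ofReal (1 - aWt cauchyDen α x) * f 0 +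
      ∫⁻ u, ENNReal.ofReal (aWt cauchyDen α x * (phi (x - u) * cauchyDen u / conv cauchyDen x)) * f u := by
  unfold coordPost
  rw [lintegral_withDensity_eq_lintegral_mul _ (measurable_coordDen α x).ennreal_ofReal hf,
    lintegral_add_measure, lintegral_dirac' _ ((measurable_coordDen α x).ennreal_ofReal.mul hf),
    add_comm]
  congr 1
  · simp [coordDen]
  · apply lintegral_congr_ae
    have : ∀ᵐ u : ℝ, u ≠ 0 := by
      simp [ae_iff]
    filter_upwards [this] with u hu
    simp [coordDen, hu]

lemma lintegral_slab {α : ℝ} (h0 : 0 < α) (h1 : α ≤ 1) (x : ℝ) :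
    ∫⁻ u, ENNReal.ofReal (aWt cauchyDen α x * (phi (x - u) * cauchyDen u / conv cauchyDen x)) =
      ENNReal.ofReal (aWt cauchyDen α x) := by
  have ha := aWt_nonneg h0 h1 x
  have hg := conv_pos x
  have : ∀ u, ENNReal.ofReal (aWt cauchyDen α x * (phi (x - u) * cauchyDen u / conv cauchyDen x)) =
      ENNReal.ofReal (aWt cauchyDen α x / conv cauchyDen x) * ENNReal.ofReal (phi (x - u) * cauchyDen u) := by
    intro u
    rw [← ENNReal.ofReal_mul (by positivity)]
    congr 1; ring
  simp_rw [this]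
  rw [lintegral_const_mul' _ _ (by simp), lintegral_conv_inner, ← ENNReal.ofReal_mul (by positivity)]
  congr 1
  field_simp

lemma isProb_coordPost {α : ℝ} (h0 : 0 < α) (h1 : α ≤ 1) (x : ℝ) :
    IsProbabilityMeasure (coordPost cauchyDen α x) := by
  constructor
  have := lintegral_coordPost α x (f := fun _ => 1) measurable_const
  simp only [mul_one, lintegral_slab h0 h1, lintegral_one] at this
  rw [this, ← ENNReal.ofReal_add (one_sub_aWt_nonneg h0 h1 x) (aWt_nonneg h0 h1 x)]
  simp

/-- slab second moment about an arbitrary point -/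
lemma slab_moment {α : ℝ} (h0 : 0 < α) (h1 : α ≤ 1) (x μ : ℝ) :
    ∫⁻ u, ENNReal.ofReal (aWt cauchyDen α x * (phi (x - u) * cauchyDen u / conv cauchyDen x)) *
        ENNReal.ofReal ((u - μ) ^ 2) ≤ ENNReal.ofReal (2 * K4 + 2 * (x - μ) ^ 2) := by
  have ha := aWt_nonneg h0 h1 x
  have ha1 : aWt cauchyDen α x ≤ 1 := by linarith [one_sub_aWt_nonneg h0 h1 x]
  have hg := conv_pos x
  have hK := K4_nonneg
  have hpt : ∀ u, ENNReal.ofReal (aWt cauchyDen α x * (phi (x - u) * cauchyDen u / conv cauchyDen x)) *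
        ENNReal.ofReal ((u - μ) ^ 2) ≤
      ENNReal.ofReal (2 / conv cauchyDen x) * ENNReal.ofReal ((u - x) ^ 2 * (phi (x - u) * cauchyDen u)) +
      ENNReal.ofReal (2 * (x - μ) ^ 2 / conv cauchyDen x) * ENNReal.ofReal (phi (x - u) * cauchyDen u) := by
    intro u
    have hp : 0 ≤ phi (x - u) * cauchyDen u := (mul_pos (phi_pos _) (cauchy_pos _)).le
    rw [← ENNReal.ofReal_mul (by positivity), ← ENNReal.ofReal_mul (by positivity),
      ← ENNReal.ofReal_mul (by positivity), ← ENNReal.ofReal_add (by positivity) (by positivity)]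
    apply ENNReal.ofReal_le_ofReal
    have hb : (u - μ) ^ 2 ≤ 2 * (u - x) ^ 2 + 2 * (x - μ) ^ 2 := by
      nlinarith [sq_nonneg ((u - x) - (x - μ))]
    calc aWt cauchyDen α x * (phi (x - u) * cauchyDen u / conv cauchyDen x) * (u - μ) ^ 2
        ≤ 1 * (phi (x - u) * cauchyDen u / conv cauchyDen x) * (2 * (u - x) ^ 2 + 2 * (x - μ) ^ 2) := by
          gcongr
      _ = _ := by ring
  refine (lintegral_mono hpt).trans ?_
  rw [lintegral_add_left, lintegral_const_mul' _ _ (by simp), lintegral_const_mul' _ _ (by simp),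
    lintegral_conv_inner]
  · calc _ ≤ ENNReal.ofReal (2 / conv cauchyDen x) * ENNReal.ofReal (K4 * conv cauchyDen x) +
          ENNReal.ofReal (2 * (x - μ) ^ 2 / conv cauchyDen x) * ENNReal.ofReal (conv cauchyDen x) := by
          gcongr
          exact second_moment x
      _ = _ := by
          rw [← ENNReal.ofReal_mul (by positivity), ← ENNReal.ofReal_mul (by positivity),
            ← ENNReal.ofReal_add (by positivity) (by positivity)]
          congr 1
          field_simp
  · apply Measurable.const_mul
    apply Measurable.ennreal_ofReal
    exact Measurable.mul (by fun_prop) ((measurable_phi.comp (by fun_prop)).mul measurable_cauchy)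

/-- general coordinate bound -/
lemma coord_bound {α : ℝ} (h0 : 0 < α) (h1 : α ≤ 1) (x μ : ℝ) :
    ∫⁻ u, ENNReal.ofReal ((u - μ) ^ 2) ∂(coordPost cauchyDen α x) ≤
      ENNReal.ofReal ((1 - aWt cauchyDen α x) * μ ^ 2 + (2 * K4 + 2 * (x - μ) ^ 2)) := by
  have hq := one_sub_aWt_nonneg h0 h1 x
  have hK := K4_nonneg
  rw [lintegral_coordPost α x (by fun_prop), ENNReal.ofReal_add (by positivity) (by positivity),
    ENNReal.ofReal_mul hq]
  have := slab_moment h0 h1 x μ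
  simp only [zero_sub, neg_sq]
  gcongr

/-- small-weight bound for null coordinates -/
lemma null_bound {α : ℝ} (h0 : 0 < α) (h1 : α ≤ 1 / 2) (x : ℝ) :
    ∫⁻ u, ENNReal.ofReal ((u - 0) ^ 2) ∂(coordPost cauchyDen α x) ≤ ENNReal.ofReal (α / phi x) := by
  have hg := conv_pos x
  have hφ := phi_pos x
  have hα1 : α ≤ 1 := by linarith
  have ha := aWt_nonneg h0 hα1 x
  rw [lintegral_coordPost α x (by fun_prop)]
  have hpt : ∀ u, ENNReal.ofReal (aWt cauchyDen α x * (phi (x - u) * cauchyDen u / conv cauchyDen x)) *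
        ENNReal.ofReal ((u - 0) ^ 2) ≤ ENNReal.ofReal (α / phi x * phi (x - u)) := by
    intro u
    have hp := phi_pos (x - u)
    have hc := cauchy_pos u
    rw [← ENNReal.ofReal_mul (by positivity)]
    apply ENNReal.ofReal_le_ofReal
    have hc2 : cauchyDen u * u ^ 2 ≤ 1 / 2 := by
      unfold cauchyDen
      rw [inv_mul_le_iff₀ (by positivity)]
      nlinarith [Real.pi_gt_three, sq_nonneg u]
    have hag : aWt cauchyDen α x / conv cauchyDen x ≤ 2 * α / phi x := by
      unfold aWt
      rw [div_right_comm, mul_div_assoc, div_self hg.ne', mul_one]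
      have hD : phi x / 2 ≤ (1 - α) * phi x + α * conv cauchyDen x := by
        have := mul_pos h0 hg
        nlinarith
      rw [div_le_div_iff₀ (by linarith) hφ]
      nlinarith
    calc aWt cauchyDen α x * (phi (x - u) * cauchyDen u / conv cauchyDen x) * (u - 0) ^ 2
        = (aWt cauchyDen α x / conv cauchyDen x) * phi (x - u) * (cauchyDen u * u ^ 2) := by ring
      _ ≤ (2 * α / phi x) * phi (x - u) * (1 / 2) := by gcongr
      _ = _ := by ring
  simp only [sub_zero, ne_eq, OfNat.ofNat_ne_zero, not_false_eq_true, zero_pow,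
    ENNReal.ofReal_zero, mul_zero, zero_add] at hpt ⊢
  refine (lintegral_mono hpt).trans ?_
  rw [← ofReal_integral_eq_lintegral_ofReal ((integrable_phi.comp_sub_left x).const_mul _),
    integral_const_mul, integral_sub_left_eq_self phi volume x, integral_phi, mul_one]
  exact Filter.Eventually.of_forall fun u => by have := phi_pos (x - u); positivity

/-- The integral over the product posterior splits into coordinates. -/
lemma inner_bound {n : ℕ} {α : ℝ} (h0 : 0 < α) (h1 : α ≤ 1) (X θ0 b : Fin n → ℝ)
    (hb0 : ∀ i, 0 ≤ b i)
    (hb : ∀ i, ∫⁻ u, ENNReal.ofReal ((u - θ0 i) ^ 2) ∂(coordPost cauchyDen α (X i)) ≤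
      ENNReal.ofReal (b i)) :
    ∫ θ, (∑ i, (θ i - θ0 i) ^ 2) ∂(post cauchyDen n α X) ≤ ∑ i, b i := by
  have hP : ∀ i, IsProbabilityMeasure (coordPost cauchyDen α (X i)) :=
    fun i => isProb_coordPost h0 h1 (X i)
  rw [integral_eq_lintegral_of_nonneg_ae
    (Filter.Eventually.of_forall fun θ => Finset.sum_nonneg fun i _ => sq_nonneg _)
    (by apply Measurable.aestronglyMeasurable; fun_prop)]
  apply ENNReal.toReal_le_of_le_ofReal (Finset.sum_nonneg fun i _ => hb0 i)
  simp_rw [ENNReal.ofReal_sum_of_nonneg (fun i _ => sq_nonneg _)]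
  rw [ENNReal.ofReal_sum_of_nonneg (fun i _ => hb0 i), lintegral_finsetSum _ (by fun_prop)]
  apply Finset.sum_le_sum
  intro i _
  refine le_trans (le_of_eq ?_) (hb i)
  unfold post
  have := (measurePreserving_eval (fun i => coordPost cauchyDen α (X i)) i).lintegral_comp
    (f := fun u => ENNReal.ofReal ((u - θ0 i) ^ 2)) (by fun_prop)
  simpa [Function.eval] using this

/-! ### Part C: consequences of marginal likelihood maximisation -/

lemma signal_coord {a r A x : ℝ} (h0 : 0 < a) (h1 : a ≤ 1) (hr : 0 < r) (hr1 : r ≤ 1)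
    (hA : -1 ≤ A) (hq : 1 - aWt cauchyDen a x ≤ Real.exp A * (phi x / (r * conv cauchyDen x))) :
    (1 - aWt cauchyDen a x) * x ^ 2 ≤ 4 * (A + 2 + Real.log (8 / r)) := by
  have hq0 := one_sub_aWt_nonneg h0 h1 x
  have hq1 : 1 - aWt cauchyDen a x ≤ 1 := by linarith [aWt_nonneg h0 h1 x]
  set q := 1 - aWt cauchyDen a x
  have hg := conv_pos x
  have hφ := phi_pos x
  have hL : 0 ≤ Real.log (8 / r) := by
    apply Real.log_nonneg
    rw [le_div_iff₀ hr]; linarith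
  rcases hq0.eq_or_lt with hz | hpos
  · rw [← hz]; simp; linarith
  have hb : phi x / (r * conv cauchyDen x) ≤ Real.exp (-(x ^ 2 / 4)) * (8 / r) := by
    have := ratio_lower x
    rw [Real.exp_neg, div_le_iff₀ (by positivity)]
    have hE := Real.exp_pos (x ^ 2 / 4)
    calc phi x = (Real.exp (x ^ 2 / 4))⁻¹ * (8 / r) * (r * (Real.exp (x ^ 2 / 4) / 8 * phi x)) := by
          field_simp
      _ ≤ _ := by gcongr
  have hq' : q ≤ Real.exp A * (Real.exp (-(x ^ 2 / 4)) * (8 / r)) :=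
    hq.trans (mul_le_mul_of_nonneg_left hb (Real.exp_pos _).le)
  have hlog := Real.log_le_log hpos hq'
  rw [Real.log_mul (Real.exp_pos _).ne' (by positivity), Real.log_mul (Real.exp_pos _).ne' (by positivity),
    Real.log_exp, Real.log_exp] at hlog
  have hql : -(q * Real.log q) ≤ 1 := by
    have := Real.one_sub_inv_le_log_of_pos hpos
    have h2 := mul_le_mul_of_nonneg_left this hq0
    rw [mul_sub, mul_inv_cancel₀ hpos.ne'] at h2
    linarith
  have hx : x ^ 2 ≤ 4 * (A + Real.log (8 / r) - Real.log q) := by linarith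
  have := mul_le_mul_of_nonneg_left hx hq0
  have h3 : q * (A + 1 + Real.log (8 / r)) ≤ 1 * (A + 1 + Real.log (8 / r)) :=
    mul_le_mul_of_nonneg_right hq1 (by linarith)
  nlinarith

lemma signal_sum {n : ℕ} {a r : ℝ} (X : Fin n → ℝ) (S : Finset (Fin n)) (h0 : 0 < a) (h1 : a ≤ 1)
    (hr : 0 < r) (hr1 : r ≤ 1 / 2)
    (hm : a < r → logMarg cauchyDen r X ≤ logMarg cauchyDen a X) :
    ∑ i ∈ S, (1 - aWt cauchyDen a (X i)) * X i ^ 2 ≤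
      4 * (2 * n * r + S.card * (2 + Real.log (8 / r))) := by
  rcases le_or_gt r a with hra | hra
  · have : ∀ i ∈ S, (1 - aWt cauchyDen a (X i)) * X i ^ 2 ≤ 4 * (0 + 2 + Real.log (8 / r)) := by
      intro i _
      apply signal_coord h0 h1 hr (by linarith) (by norm_num)
      have hg := conv_pos (X i)
      have hφ := phi_pos (X i)
      rw [one_sub_aWt h0 h1, Real.exp_zero, one_mul]
      have := mul_nonneg (sub_nonneg.mpr h1) hφ.le
      apply div_le_div₀ hφ.le (by nlinarith) (by positivity)
      nlinarith [mul_le_mul_of_nonneg_right hra hg.le]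
    have h := Finset.sum_le_sum this
    rw [Finset.sum_const, nsmul_eq_mul] at h
    have : 0 ≤ (n : ℝ) * r := by positivity
    linarith
  · have hm := hm hra
    let D : ℝ → ℝ → ℝ := fun α x => (1 - α) * phi x + α * conv cauchyDen x
    let A : Fin n → ℝ := fun i => Real.log (D r (X i)) - Real.log (D a (X i))
    have hDr : ∀ x, 0 < D r x := fun x => den_pos hr (by linarith) x
    have hDa : ∀ x, 0 < D a x := fun x => den_pos h0 h1 x
    have hAsum : ∑ i, A i ≤ 0 := by
      simp only [A]
      rw [Finset.sum_sub_distrib]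
      unfold logMarg at hm
      linarith
    have hAlow : ∀ i, -(2 * r) ≤ A i := by
      intro i
      have hg := conv_pos (X i)
      have hφ := phi_pos (X i)
      have h2 : (1 - r) * D a (X i) ≤ D r (X i) := by
        simp only [D]
        have : (1 - r) * a ≤ r := by nlinarith
        nlinarith [mul_le_mul_of_nonneg_right this hg.le, mul_nonneg (mul_nonneg (by linarith : 0 ≤ 1 - r) h0.le) hφ.le]
      have h3 := Real.log_le_log (mul_pos (by linarith) (hDa (X i))) h2
      rw [Real.log_mul (by linarith) (hDa _).ne'] at h3
      have h4 : -(2 * r) ≤ Real.log (1 - r) := by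
        have := Real.one_sub_inv_le_log_of_pos (by linarith : 0 < 1 - r)
        refine le_trans ?_ this
        have h5 : (1 - r)⁻¹ ≤ 1 + 2 * r := by
          rw [inv_le_iff_one_le_mul₀ (by linarith)]
          nlinarith
        linarith
      simp only [A]
      linarith
    have hco : ∀ i ∈ S, (1 - aWt cauchyDen a (X i)) * X i ^ 2 ≤ 4 * (A i + 2 + Real.log (8 / r)) := by
      intro i _
      apply signal_coord h0 h1 hr (by linarith) (by linarith [hAlow i])
      have hg := conv_pos (X i)
      have hφ := phi_pos (X i)
      rw [one_sub_aWt h0 h1]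
      simp only [A]
      rw [Real.exp_sub, Real.exp_log (hDr _), Real.exp_log (hDa _), div_mul_div_comm,
        div_le_div_iff₀ (hDa _) (mul_pos (hDa _) (by positivity))]
      have e1 : (1 - a) * phi (X i) ≤ phi (X i) := by nlinarith
      have e2 : r * conv cauchyDen (X i) ≤ D r (X i) := by
        simp only [D]
        have := mul_nonneg (by linarith : 0 ≤ 1 - r) hφ.le
        linarith
      have hDai := hDa (X i)
      calc (1 - a) * phi (X i) * (D a (X i) * (r * conv cauchyDen (X i)))
          ≤ phi (X i) * (D a (X i) * D r (X i)) := by gcongr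
        _ = D r (X i) * phi (X i) * D a (X i) := by ring
    have h := Finset.sum_le_sum hco
    have hAS : ∑ i ∈ S, A i ≤ 2 * n * r := by
      have h1 : ∑ i ∈ S, (A i + 2 * r) ≤ ∑ i, (A i + 2 * r) :=
        Finset.sum_le_sum_of_subset_of_nonneg (Finset.subset_univ _)
          fun i _ _ => by linarith [hAlow i]
      rw [Finset.sum_add_distrib, Finset.sum_add_distrib] at h1
      simp only [Finset.sum_const, nsmul_eq_mul, Finset.card_univ, Fintype.card_fin] at h1
      have : 0 ≤ (S.card : ℝ) * (2 * r) := by positivity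
      linarith
    rw [← Finset.mul_sum, Finset.sum_congr rfl (fun i _ => add_assoc (A i) 2 _),
      Finset.sum_add_distrib, Finset.sum_const, nsmul_eq_mul] at h
    linarith

/-- One-coordinate likelihood ratio between the weights `2α` and `α`. -/
def Rr (α x : ℝ) : ℝ :=
  ((1 - 2 * α) * phi x + 2 * α * conv cauchyDen x) / ((1 - α) * phi x + α * conv cauchyDen x)

lemma Rr_pos {α : ℝ} (h0 : 0 < α) (h1 : 2 * α ≤ 1) (x : ℝ) : 0 < Rr α x :=
  div_pos (den_pos (by linarith) h1 x) (den_pos h0 (by linarith) x)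

lemma Rr_le {α : ℝ} (h0 : 0 < α) (h1 : 2 * α ≤ 1) (x : ℝ) : Rr α x ≤ 2 := by
  unfold Rr
  rw [div_le_iff₀ (den_pos h0 (by linarith) x)]
  linarith [phi_pos x]

lemma measurable_Rr (α : ℝ) : Measurable (Rr α) := by
  have h1 := measurable_phi
  have h2 := measurable_conv
  unfold Rr
  fun_prop

lemma event_bound {n : ℕ} {a α : ℝ} (X : Fin n → ℝ) (h1 : a ≤ 1)
    (hα : 0 < α) (ha : 2 * α < a)
    (hm : logMarg cauchyDen α X ≤ logMarg cauchyDen a X) :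
    1 ≤ ∏ i, Rr α (X i) := by
  set t := α / (a - α) with ht
  have hd : 0 < a - α := by linarith
  have ht0 : 0 < t := by positivity
  have ht1 : t ≤ 1 := by rw [ht, div_le_one hd]; linarith
  have hta : (1 - t) * α + t * a = 2 * α := by
    rw [ht]; field_simp; ring
  have hD1 : ∀ x, 0 < (1 - α) * phi x + α * conv cauchyDen x := fun x => den_pos hα (by linarith) x
  have hDa : ∀ x, 0 < (1 - a) * phi x + a * conv cauchyDen x := fun x => den_pos (by linarith) h1 x
  have hD2 : ∀ x, 0 < (1 - 2 * α) * phi x + 2 * α * conv cauchyDen x :=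
    fun x => den_pos (by linarith) (by linarith) x
  have hconc : ∀ x, (1 - t) * Real.log ((1 - α) * phi x + α * conv cauchyDen x) +
      t * Real.log ((1 - a) * phi x + a * conv cauchyDen x) ≤
      Real.log ((1 - 2 * α) * phi x + 2 * α * conv cauchyDen x) := by
    intro x
    have := strictConcaveOn_log_Ioi.concaveOn.2 (hD1 x) (hDa x) (by linarith : 0 ≤ 1 - t) ht0.le
      (by ring)
    simp only [smul_eq_mul] at this
    refine this.trans (le_of_eq ?_)
    congr 1
    rw [← hta]; ring
  have hsum : (1 - t) * logMarg cauchyDen α X + t * logMarg cauchyDen a X ≤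
      ∑ i, Real.log ((1 - 2 * α) * phi (X i) + 2 * α * conv cauchyDen (X i)) := by
    unfold logMarg
    rw [Finset.mul_sum, Finset.mul_sum, ← Finset.sum_add_distrib]
    exact Finset.sum_le_sum fun i _ => hconc (X i)
  have hge : logMarg cauchyDen α X ≤
      ∑ i, Real.log ((1 - 2 * α) * phi (X i) + 2 * α * conv cauchyDen (X i)) := by
    nlinarith [mul_le_mul_of_nonneg_left hm ht0.le]
  have hR : ∀ i, 0 < Rr α (X i) := fun i => Rr_pos hα (by linarith) _
  have hlog : 0 ≤ Real.log (∏ i, Rr α (X i)) := by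
    rw [Real.log_prod (fun i _ => (hR i).ne')]
    unfold Rr
    rw [Finset.sum_congr rfl fun i _ => Real.log_div (hD2 (X i)).ne' (hD1 (X i)).ne',
      Finset.sum_sub_distrib]
    unfold logMarg at hge
    linarith
  by_contra hlt
  push Not at hlt
  have := Real.log_neg (Finset.prod_pos fun i _ => hR i) hlt
  linarith

/-! ### Part D: expectations under the data distribution -/

/-- Expected likelihood ratio under the null. -/
lemma null_ratio {α lam : ℝ} (h0 : 0 < α) (h1 : 2 * α ≤ 1) (hl : 1 ≤ lam)
    (hE : 16 ≤ Real.exp (lam ^ 2)) (hα : 1 ≤ α * Real.exp (lam ^ 2)) :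
    ∫ x, Rr α x ∂(ProbabilityTheory.gaussianReal 0 1) ≤ 1 - α / (400 * lam) := by
  rw [integral_gauss]
  set T := 4 * lam with hT
  set c := α / 4 * (π * (2 + (2 * T) ^ 2))⁻¹ with hc
  have hc0 : 0 ≤ c := by positivity
  have iφ := integrable_phi.const_mul (1 - α)
  have ig := integrable_conv_fun.const_mul α
  have iI : Integrable ((Set.Icc T (2 * T)).indicator fun _ : ℝ => c) :=
    (integrable_indicator_iff measurableSet_Icc).mpr (by simp)
  have iD : Integrable (fun x => (1 - α) * phi x + α * conv cauchyDen x) := iφ.add ig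
  have hpt : ∀ x, phi x * Rr α x ≤ ((1 - α) * phi x + α * conv cauchyDen x) -
      (Set.Icc T (2 * T)).indicator (fun _ : ℝ => c) x := by
    intro x
    have hD := den_pos h0 (by linarith) x
    have hg := conv_pos x
    have hφ := phi_pos x
    set g := conv cauchyDen x with hgdef
    set D := (1 - α) * phi x + α * g with hDdef
    have e : D - phi x * Rr α x = (α * (g - phi x)) ^ 2 / D := by
      unfold Rr
      rw [← hgdef, ← hDdef]
      rw [eq_div_iff hD.ne', sub_mul, mul_div_assoc', div_mul_cancel₀ _ hD.ne', hDdef]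
      ring
    by_cases hx : x ∈ Set.Icc T (2 * T)
    · rw [Set.indicator_of_mem hx]
      have hx0 : 0 ≤ x := le_trans (by positivity) hx.1
      have hB := ratio_lower x
      rw [← hgdef] at hB
      have hexp : Real.exp (lam ^ 2) ^ 4 ≤ Real.exp (x ^ 2 / 4) := by
        rw [← Real.exp_nat_mul]
        apply Real.exp_le_exp.mpr
        have : T ^ 2 ≤ x ^ 2 := pow_le_pow_left₀ (by positivity) hx.1 2
        rw [hT] at this
        push_cast
        nlinarith
      set E := Real.exp (lam ^ 2)
      have hEα : 16 ≤ α * E ^ 4 := by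
        have : (16:ℝ) * 1 ≤ E ^ 3 * (α * E) := by
          apply mul_le_mul _ hα (by norm_num) (by positivity)
          nlinarith [mul_le_mul hE hE (by norm_num) (by linarith)]
        nlinarith
      have hg2 : 2 * phi x ≤ α * g := by
        have h3 : α * E ^ 4 ≤ α * Real.exp (x ^ 2 / 4) := by gcongr
        have h4 := mul_le_mul_of_nonneg_left hB h0.le
        have h5 := mul_le_mul_of_nonneg_right (hEα.trans h3) hφ.le
        linarith
      have hg3 : 2 * phi x ≤ g := by nlinarith
      have hβ : phi x ≤ α * (g - phi x) := by nlinarith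
      have hDle : D ≤ 2 * (α * (g - phi x)) := by rw [hDdef]; nlinarith
      have hlow : α * g / 4 ≤ (α * (g - phi x)) ^ 2 / D := by
        rw [le_div_iff₀ hD]
        have hy : α * g / 4 ≤ α * (g - phi x) / 2 := by nlinarith
        have hy0 : 0 ≤ α * (g - phi x) := hφ.le.trans hβ
        calc α * g / 4 * D ≤ α * (g - phi x) / 2 * (2 * (α * (g - phi x))) := by gcongr
          _ = _ := by ring
      have hcg : c ≤ α * g / 4 := by
        have h6 : (π * (2 + (2 * T) ^ 2))⁻¹ ≤ g := by
          refine le_trans ?_ (conv_lower x)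
          have : x ^ 2 ≤ (2 * T) ^ 2 := pow_le_pow_left₀ hx0 hx.2 2
          gcongr
        rw [hc]
        calc α / 4 * (π * (2 + (2 * T) ^ 2))⁻¹ ≤ α / 4 * g := by gcongr
          _ = _ := by ring
      linarith
    · rw [Set.indicator_of_notMem hx]
      have : 0 ≤ (α * (g - phi x)) ^ 2 / D := by positivity
      linarith
  have hpt0 : ∀ x, 0 ≤ phi x * Rr α x := fun x => (mul_pos (phi_pos x) (Rr_pos h0 h1 x)).le
  refine (integral_mono_of_nonneg (Filter.Eventually.of_forall hpt0) (iD.sub iI)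
    (Filter.Eventually.of_forall hpt)).trans ?_
  simp only [Pi.sub_apply]
  rw [integral_sub iD iI, integral_add iφ ig, integral_const_mul, integral_const_mul, integral_phi,
    integral_conv, integral_indicator measurableSet_Icc, setIntegral_const]
  have hvol : (volume : Measure ℝ).real (Set.Icc T (2 * T)) = T := by
    rw [Real.volume_real_Icc_of_le (by linarith)]; ring
  rw [hvol, smul_eq_mul]
  have hfin : α / (400 * lam) ≤ T * c := by
    rw [hc, ← div_eq_mul_inv, div_div, mul_div_assoc', div_le_div_iff₀ (by positivity) (by positivity), hT]
    have hπ := Real.pi_lt_d2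
    have hl2 : 1 ≤ lam ^ 2 := by nlinarith
    have h7 : π * (2 + (2 * (4 * lam)) ^ 2) ≤ 3.15 * (66 * lam ^ 2) := by
      apply mul_le_mul hπ.le (by nlinarith) (by positivity) (by norm_num)
    have h8 : 4 * (π * (2 + (2 * (4 * lam)) ^ 2)) ≤ 4 * lam * (400 * lam) := by nlinarith
    calc α * (4 * (π * (2 + (2 * (4 * lam)) ^ 2))) ≤ α * (4 * lam * (400 * lam)) := by gcongr
      _ = _ := by ring
  linarith

/-- crude null coordinate bound -/
def qd (x : ℝ) : ℝ := 2 * K4 + 2 * x ^ 2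

lemma qd_nonneg (x : ℝ) : 0 ≤ qd x := by
  have := K4_nonneg
  unfold qd; positivity

lemma measurable_qd : Measurable qd := by unfold qd; fun_prop

lemma integrable_phi_qd : Integrable (fun x => phi x * qd x) := by
  have h0 := integrable_pow_phi 0
  have h2 := integrable_pow_phi 2
  refine ((h0.const_mul (2 * K4)).add (h2.const_mul 2)).congr (Filter.Eventually.of_forall fun x => ?_)
  simp only [Pi.add_apply, qd]; ring

lemma integrable_qd : Integrable qd (ProbabilityTheory.gaussianReal 0 1) :=
  integrable_gauss integrable_phi_qd

lemma integral_qd : ∫ x, qd x ∂(ProbabilityTheory.gaussianReal 0 1) = 2 * K4 + 2 := by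
  rw [integral_gauss]
  have h0 := integrable_phi
  have h2 := integrable_pow_phi 2
  have e : ∀ x, phi x * qd x = 2 * K4 * phi x + 2 * (x ^ 2 * phi x) := by
    intro x; unfold qd; ring
  simp_rw [e]
  rw [integral_add (h0.const_mul _) (h2.const_mul _), integral_const_mul, integral_const_mul,
    integral_phi, integral_sq_phi]
  ring

def K5 : ℝ := ∫ x, qd x * Real.exp (-(1 / 4) * x ^ 2)

lemma integrable_K5 : Integrable (fun x => qd x * Real.exp (-(1 / 4) * x ^ 2)) := by
  have h0 := integrable_exp_neg_mul_sq (b := 1 / 4) (by norm_num)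
  have h2 := integrable_rpow_mul_exp_neg_mul_sq (b := 1 / 4) (by norm_num) (s := 2) (by norm_num)
  refine ((h0.const_mul (2 * K4)).add (h2.const_mul 2)).congr (Filter.Eventually.of_forall fun x => ?_)
  simp only [Pi.add_apply, qd, Real.rpow_ofNat]; ring

lemma K5_nonneg : 0 ≤ K5 := integral_nonneg fun x => mul_nonneg (qd_nonneg x) (Real.exp_pos _).le

/-- null coordinate bound on the good event -/
def nm (α x : ℝ) : ℝ := min (α / phi x) (qd x)

lemma nm_nonneg {α : ℝ} (h : 0 ≤ α) (x : ℝ) : 0 ≤ nm α x :=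
  le_min (div_nonneg h (phi_pos x).le) (qd_nonneg x)

lemma measurable_nm (α : ℝ) : Measurable (nm α) := by
  unfold nm
  exact (measurable_phi.const_div α).min measurable_qd

lemma integrable_nm {α : ℝ} (h : 0 ≤ α) : Integrable (nm α) (ProbabilityTheory.gaussianReal 0 1) := by
  refine integrable_qd.mono' (measurable_nm α).aestronglyMeasurable (Filter.Eventually.of_forall fun x => ?_)
  rw [Real.norm_of_nonneg (nm_nonneg h x)]
  exact min_le_right _ _

lemma integral_nm {α lam : ℝ} (h0 : 0 < α) (hl : 0 ≤ lam) (hα : 1 ≤ α * Real.exp (lam ^ 2)) :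
    ∫ x, nm α x ∂(ProbabilityTheory.gaussianReal 0 1) ≤ α * (4 * lam + K5) := by
  rw [integral_gauss]
  set T := 2 * lam with hT
  have iI : Integrable ((Set.Icc (-T) T).indicator fun _ : ℝ => (1:ℝ)) :=
    (integrable_indicator_iff measurableSet_Icc).mpr (by simp)
  have hpt : ∀ x, phi x * nm α x ≤ α * ((Set.Icc (-T) T).indicator (fun _ : ℝ => (1:ℝ)) x +
      qd x * Real.exp (-(1 / 4) * x ^ 2)) := by
    intro x
    have hφ := phi_pos x
    have hq := qd_nonneg x
    by_cases hx : x ∈ Set.Icc (-T) T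
    · rw [Set.indicator_of_mem hx]
      have h1 : phi x * nm α x ≤ α := by
        calc phi x * nm α x ≤ phi x * (α / phi x) := by
              gcongr; exact min_le_left _ _
          _ = α := by field_simp
      have : 0 ≤ α * (qd x * Real.exp (-(1 / 4) * x ^ 2)) := by positivity
      linarith
    · rw [Set.indicator_of_notMem hx, zero_add]
      have hxT : T ^ 2 ≤ x ^ 2 := by
        rw [Set.mem_Icc, ← abs_le] at hx
        push Not at hx
        rw [← sq_abs x]
        exact pow_le_pow_left₀ (by positivity) hx.le 2
      have h2 : phi x ≤ α * Real.exp (-(1 / 4) * x ^ 2) := by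
        have h3 : phi x ≤ Real.exp (-x ^ 2 / 2) := by
          unfold phi
          apply div_le_self (Real.exp_pos _).le
          rw [Real.one_le_sqrt]; linarith [Real.pi_gt_three]
        have h4 : Real.exp (-x ^ 2 / 2) ≤ Real.exp (-(lam ^ 2)) * Real.exp (-(1 / 4) * x ^ 2) := by
          rw [← Real.exp_add]
          apply Real.exp_le_exp.mpr
          rw [hT] at hxT
          nlinarith
        have h5 : Real.exp (-(lam ^ 2)) ≤ α := by
          rw [Real.exp_neg, inv_le_iff_one_le_mul₀ (Real.exp_pos _)]
          exact hα
        exact h3.trans (h4.trans (by gcongr))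
      calc phi x * nm α x ≤ (α * Real.exp (-(1 / 4) * x ^ 2)) * qd x := by
            apply mul_le_mul h2 (min_le_right _ _) (nm_nonneg h0.le x) (by positivity)
        _ = _ := by ring
  refine (integral_mono_of_nonneg (Filter.Eventually.of_forall fun x =>
    mul_nonneg (phi_pos x).le (nm_nonneg h0.le x)) ((iI.add integrable_K5).const_mul α)
    (Filter.Eventually.of_forall hpt)).trans ?_
  simp only [Pi.add_apply]
  rw [integral_const_mul, integral_add iI integrable_K5, integral_indicator measurableSet_Icc,
    setIntegral_const, Real.volume_real_Icc_of_le (by linarith)]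
  apply le_of_eq
  unfold K5
  simp only [smul_eq_mul]
  rw [hT]; ring

lemma integrable_Rr {α : ℝ} (h0 : 0 < α) (h1 : 2 * α ≤ 1) (P : Measure ℝ) [IsProbabilityMeasure P] :
    Integrable (Rr α) P := by
  refine (integrable_const (2:ℝ)).mono' (measurable_Rr α).aestronglyMeasurable
    (Filter.Eventually.of_forall fun x => ?_)
  rw [Real.norm_of_nonneg (Rr_pos h0 h1 x).le]
  exact Rr_le h0 h1 x

lemma integrable_qdRr {α : ℝ} (h0 : 0 < α) (h1 : 2 * α ≤ 1) :
    Integrable (fun x => qd x * Rr α x) (ProbabilityTheory.gaussianReal 0 1) := by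
  refine (integrable_qd.mul_const 2).mono' (measurable_qd.mul (measurable_Rr α)).aestronglyMeasurable
    (Filter.Eventually.of_forall fun x => ?_)
  rw [Real.norm_of_nonneg (mul_nonneg (qd_nonneg x) (Rr_pos h0 h1 x).le)]
  exact mul_le_mul_of_nonneg_left (Rr_le h0 h1 x) (qd_nonneg x)

/-- Expected crude loss on the bad event. -/
lemma bad_event {n : ℕ} {α lam : ℝ} (θ : Fin n → ℝ) (h0 : 0 < α) (h1 : 2 * α ≤ 1) (hl : 1 ≤ lam)
    (hE : 16 ≤ Real.exp (lam ^ 2)) (hα : 1 ≤ α * Real.exp (lam ^ 2)) (j : Fin n) (hj : θ j = 0) :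
    Integrable (fun X : Fin n → ℝ => qd (X j) * ∏ i, Rr α (X i)) (Pdata n θ) ∧
    ∫ X, qd (X j) * ∏ i, Rr α (X i) ∂(Pdata n θ) ≤
      8 * (K4 + 1) * ((1 - α / (400 * lam)) ^ (Finset.univ.filter fun i => θ i = 0).card *
        2 ^ (Finset.univ.filter fun i => ¬ θ i = 0).card) := by
  let f : Fin n → ℝ → ℝ := fun i x => (if i = j then qd x else 1) * Rr α x
  have hf : ∀ X : Fin n → ℝ, qd (X j) * ∏ i, Rr α (X i) = ∏ i, f i (X i) := by
    intro X
    simp only [f]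
    rw [Finset.prod_mul_distrib]
    simp
  have hfint : ∀ i, Integrable (f i) (ProbabilityTheory.gaussianReal (θ i) 1) := by
    intro i
    by_cases hi : i = j
    · subst hi
      simp only [f, if_true, hj]
      exact integrable_qdRr h0 h1
    · simp only [f, hi, if_false, one_mul]
      exact integrable_Rr h0 h1 _
  have hρ : 1 / 2 ≤ 1 - α / (400 * lam) := by
    have : α / (400 * lam) ≤ 1 / 2 := by
      rw [div_le_iff₀ (by positivity)]; nlinarith
    linarith
  have hK := K4_nonneg
  simp_rw [hf]
  refine ⟨Integrable.fintype_prod hfint, ?_⟩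
  unfold Pdata
  rw [integral_fintype_prod_eq_prod]
  have hb : ∏ i, ∫ x, f i x ∂(ProbabilityTheory.gaussianReal (θ i) 1) ≤
      ∏ i, ((if i = j then 8 * (K4 + 1) else 1) * (if θ i = 0 then 1 - α / (400 * lam) else 2)) := by
    apply Finset.prod_le_prod
    · intro i _
      apply integral_nonneg
      intro x
      have := qd_nonneg x
      have := (Rr_pos h0 h1 x).le
      simp only [f]
      split_ifs <;> positivity
    · intro i _
      by_cases hi : i = j
      · subst hi
        simp only [f, if_true, hj]
        have h3 : ∫ x, qd x * Rr α x ∂(ProbabilityTheory.gaussianReal 0 1) ≤ 4 * (K4 + 1) := by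
          calc _ ≤ ∫ x, qd x * 2 ∂(ProbabilityTheory.gaussianReal 0 1) :=
                integral_mono (integrable_qdRr h0 h1) (integrable_qd.mul_const 2)
                  fun x => mul_le_mul_of_nonneg_left (Rr_le h0 h1 x) (qd_nonneg x)
            _ = _ := by rw [integral_mul_const, integral_qd]; ring
        nlinarith
      · simp only [f, hi, if_false, one_mul]
        by_cases hz : θ i = 0
        · simp only [hz, if_true]
          exact null_ratio h0 h1 hl hE hα
        · simp only [hz, if_false]
          calc _ ≤ ∫ x, (2:ℝ) ∂(ProbabilityTheory.gaussianReal (θ i) 1) :=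
                integral_mono (integrable_Rr h0 h1 _) (integrable_const _) fun x => Rr_le h0 h1 x
            _ = 2 := by simp
  refine hb.trans (le_of_eq ?_)
  rw [Finset.prod_mul_distrib, Finset.prod_ite_eq', Finset.prod_ite]
  simp

lemma signal_noise (μ : ℝ) :
    Integrable (fun x : ℝ => (x - μ) ^ 2) (ProbabilityTheory.gaussianReal μ 1) ∧
    ∫ x, (x - μ) ^ 2 ∂(ProbabilityTheory.gaussianReal μ 1) = 1 := by
  constructor
  · have := (ProbabilityTheory.memLp_id_gaussianReal (μ := μ) (v := 1) 2).sub (memLp_const μ)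
    exact this.integrable_sq
  · have := ProbabilityTheory.variance_fun_id_gaussianReal (μ := μ) (v := 1)
    rw [ProbabilityTheory.variance_eq_integral (by fun_prop),
      ProbabilityTheory.integral_id_gaussianReal] at this
    simpa using this

lemma coord_integral {n : ℕ} (θ : Fin n → ℝ) (i : Fin n) (f : ℝ → ℝ)
    (hf : Integrable f (ProbabilityTheory.gaussianReal (θ i) 1)) :
    Integrable (fun X : Fin n → ℝ => f (X i)) (Pdata n θ) ∧
    ∫ X, f (X i) ∂(Pdata n θ) = ∫ x, f x ∂(ProbabilityTheory.gaussianReal (θ i) 1) := by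
  unfold Pdata
  have hp := measurePreserving_eval (fun i => ProbabilityTheory.gaussianReal (θ i) 1) i
  constructor
  · exact hp.integrable_comp_of_integrable hf
  · rw [← hp.map_eq, integral_map hp.measurable.aemeasurable]
    rw [hp.map_eq]; exact hf.aestronglyMeasurable

/-- Upper bound on the lower end of the maximisation range. -/
lemma alphan_bound {α x : ℝ} (h0 : 0 < α) (h1 : α ≤ 1) (hx0 : 0 < x) (hx : 8 * K4 ≤ x ^ 2)
    (hm : medianZero cauchyDen α x) : α ≤ 12 * (2 + x ^ 2) * Real.exp (-x ^ 2 / 2) := by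
  have hK := K4_nonneg
  have hg := conv_pos x
  have hφ := phi_pos x
  have ha := aWt_nonneg h0 h1 x
  have hq := one_sub_aWt_nonneg h0 h1 x
  have h := hm.1
  rw [← lintegral_indicator_one measurableSet_Iic,
    lintegral_coordPost α x (measurable_one.indicator measurableSet_Iic)] at h
  have hs : ∫⁻ u, ENNReal.ofReal (aWt cauchyDen α x * (phi (x - u) * cauchyDen u / conv cauchyDen x)) *
      (Set.Iic (0:ℝ)).indicator 1 u ≤ ENNReal.ofReal (1 / 4) := by
    calc _ ≤ ∫⁻ u, ENNReal.ofReal (1 / x ^ 2) * (ENNReal.ofReal (aWt cauchyDen α x * (phi (x - u) * cauchyDen u / conv cauchyDen x)) * ENNReal.ofReal ((u - x) ^ 2)) := by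
          apply lintegral_mono
          intro u
          by_cases hu : u ∈ Set.Iic (0:ℝ)
          · simp only [Set.indicator_of_mem hu, Pi.one_apply, mul_one]
            rw [mul_left_comm, ← ENNReal.ofReal_mul (by positivity)]
            apply le_mul_of_one_le_right (by positivity)
            rw [ENNReal.one_le_ofReal, one_div, ← div_eq_inv_mul, one_le_div (by positivity)]
            have : u ≤ 0 := hu
            nlinarith
          · simp [Set.indicator_of_notMem hu]
      _ = ENNReal.ofReal (1 / x ^ 2) * _ := lintegral_const_mul' _ _ (by simp)
      _ ≤ ENNReal.ofReal (1 / x ^ 2) * ENNReal.ofReal (2 * K4 + 2 * (x - x) ^ 2) := by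
          gcongr
          exact slab_moment h0 h1 x x
      _ ≤ _ := by
          rw [← ENNReal.ofReal_mul (by positivity)]
          apply ENNReal.ofReal_le_ofReal
          rw [one_div, inv_mul_le_iff₀ (by positivity)]
          simp only [sub_self]
          nlinarith
  have h2 : (2⁻¹ : ENNReal) ≤ ENNReal.ofReal (1 - aWt cauchyDen α x + 1 / 4) := by
    rw [ENNReal.ofReal_add hq (by norm_num)]
    refine h.trans (add_le_add ?_ hs)
    simp
  have h3 : (1 / 2 : ℝ) ≤ 1 - aWt cauchyDen α x + 1 / 4 := by
    have e : (2⁻¹ : ENNReal) = ENNReal.ofReal (1 / 2) := by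
      rw [one_div, ENNReal.ofReal_inv_of_pos (by norm_num)]; simp
    rw [e] at h2
    exact (ENNReal.ofReal_le_ofReal_iff (by positivity)).mp h2
  have h4 : 1 / 4 ≤ (1 - α) * phi x / ((1 - α) * phi x + α * conv cauchyDen x) := by
    rw [← one_sub_aWt h0 h1]; linarith
  rw [le_div_iff₀ (den_pos h0 h1 x)] at h4
  have h5 : α * conv cauchyDen x ≤ 3 * phi x := by nlinarith
  have h6 : phi x ≤ Real.exp (-x ^ 2 / 2) := by
    unfold phi
    apply div_le_self (Real.exp_pos _).le
    rw [Real.one_le_sqrt]; linarith [Real.pi_gt_three]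
  have h7 : α * (π * (2 + x ^ 2))⁻¹ ≤ 3 * Real.exp (-x ^ 2 / 2) :=
    (mul_le_mul_of_nonneg_left (conv_lower x) h0.le).trans (h5.trans (by linarith))
  rw [← div_eq_mul_inv, div_le_iff₀ (by positivity)] at h7
  refine h7.trans ?_
  have hE := Real.exp_pos (-x ^ 2 / 2)
  calc 3 * Real.exp (-x ^ 2 / 2) * (π * (2 + x ^ 2)) ≤ 3 * Real.exp (-x ^ 2 / 2) * (4 * (2 + x ^ 2)) := by
        gcongr; exact Real.pi_le_four
    _ = _ := by ring

/-! ### Part E: assembly -/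

/-- the explicit constant -/
def C0 : ℝ := 3200 * (4 + K5) + 8 * (K4 + 1) + (4 + 2 * K4) + 104

lemma C0_pos : 0 < C0 := by
  have := K4_nonneg
  have := K5_nonneg
  unfold C0; positivity

/-- Pointwise bound on the posterior second moment. -/
lemma pointwise_bound {n : ℕ} {a α r : ℝ} (X θ : Fin n → ℝ) (h0 : 0 < a) (h1 : a ≤ 1)
    (hr : 0 < r) (hr1 : r ≤ 1 / 2) (hα : 0 < α) (hα1 : 2 * α ≤ 1 / 2)
    (hm : a < r → logMarg cauchyDen r X ≤ logMarg cauchyDen a X)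
    (hm2 : 2 * α < a → logMarg cauchyDen α X ≤ logMarg cauchyDen a X) :
    ∫ u, (∑ i, (u i - θ i) ^ 2) ∂(post cauchyDen n a X) ≤
      ∑ i ∈ Finset.univ.filter (fun i => θ i = 0), (nm (2 * α) (X i) + qd (X i) * ∏ k, Rr α (X k)) +
      (∑ i ∈ Finset.univ.filter (fun i => ¬ θ i = 0), (4 * (X i - θ i) ^ 2 + 2 * K4) +
        8 * (2 * n * r + (Finset.univ.filter (fun i => ¬ θ i = 0)).card * (2 + Real.log (8 / r)))) := by
  have hK := K4_nonneg
  have hprod : 0 ≤ ∏ k, Rr α (X k) := Finset.prod_nonneg fun k _ => (Rr_pos hα (by linarith) _).le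
  let b : Fin n → ℝ := fun i => if θ i = 0 then nm (2 * α) (X i) + qd (X i) * ∏ k, Rr α (X k)
    else (1 - aWt cauchyDen a (X i)) * θ i ^ 2 + (2 * K4 + 2 * (X i - θ i) ^ 2)
  have hb := inner_bound h0 h1 X θ b (by
    intro i
    have hq := one_sub_aWt_nonneg h0 h1 (X i)
    have := nm_nonneg (by linarith : 0 ≤ 2 * α) (X i)
    have := qd_nonneg (X i)
    simp only [b]
    split_ifs <;> positivity) (by
    intro i
    simp only [b]
    split_ifs with hz
    · rw [hz]
      have hcrude : ∫⁻ u, ENNReal.ofReal ((u - 0) ^ 2) ∂(coordPost cauchyDen a (X i)) ≤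
          ENNReal.ofReal (qd (X i)) := by
        have := coord_bound h0 h1 (X i) 0
        simpa [qd] using this
      rcases le_or_gt a (2 * α) with hle | hgt
      · have h2 := null_bound h0 (by linarith) (X i)
        have hφ := phi_pos (X i)
        have h3 : ENNReal.ofReal (a / phi (X i)) ≤ ENNReal.ofReal (2 * α / phi (X i)) := by
          apply ENNReal.ofReal_le_ofReal; gcongr
        have h4 : ∫⁻ u, ENNReal.ofReal ((u - 0) ^ 2) ∂(coordPost cauchyDen a (X i)) ≤
            ENNReal.ofReal (nm (2 * α) (X i)) := by
          unfold nm
          rcases min_choice (2 * α / phi (X i)) (qd (X i)) with h | h <;> rw [h]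
          · exact h2.trans h3
          · exact hcrude
        refine h4.trans (ENNReal.ofReal_le_ofReal ?_)
        have := mul_nonneg (qd_nonneg (X i)) hprod
        linarith
      · have h2 := event_bound X h1 hα hgt (hm2 hgt)
        refine hcrude.trans (ENNReal.ofReal_le_ofReal ?_)
        have := nm_nonneg (by linarith : 0 ≤ 2 * α) (X i)
        nlinarith [mul_le_mul_of_nonneg_left h2 (qd_nonneg (X i))]
    · exact coord_bound h0 h1 (X i) (θ i))
  refine hb.trans ?_
  simp only [b]
  rw [Finset.sum_ite]
  gcongr
  have hS := signal_sum X (Finset.univ.filter (fun i => ¬ θ i = 0)) h0 h1 hr hr1 hm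
  have hle : ∀ i ∈ Finset.univ.filter (fun i => ¬ θ i = 0),
      (1 - aWt cauchyDen a (X i)) * θ i ^ 2 + (2 * K4 + 2 * (X i - θ i) ^ 2) ≤
      (4 * (X i - θ i) ^ 2 + 2 * K4) + 2 * ((1 - aWt cauchyDen a (X i)) * X i ^ 2) := by
    intro i _
    have hq := one_sub_aWt_nonneg h0 h1 (X i)
    have hq1 : 1 - aWt cauchyDen a (X i) ≤ 1 := by linarith [aWt_nonneg h0 h1 (X i)]
    have h2 : θ i ^ 2 ≤ 2 * X i ^ 2 + 2 * (X i - θ i) ^ 2 := by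
      nlinarith [sq_nonneg (2 * X i - θ i)]
    have h3 := mul_le_mul_of_nonneg_left h2 hq
    have h4 := mul_le_mul_of_nonneg_right hq1 (sq_nonneg (X i - θ i))
    nlinarith
  refine (Finset.sum_le_sum hle).trans ?_
  rw [Finset.sum_add_distrib, ← Finset.mul_sum]
  linarith

lemma final_numeric {n s r lam α k4 k5 L E : ℝ} (hs0 : 0 ≤ s) (hs1 : 1 ≤ s) (hlam1 : 1 ≤ lam)
    (hK4 : 0 ≤ k4) (hK5 : 0 ≤ k5) (hnr : n * r = s) (hα : α = 1600 * r * lam)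
    (hL : L ≤ 7 + lam ^ 2) (hE : n * E ≤ 1) :
    n * (2 * α * (4 * lam + k5) + 8 * (k4 + 1) * E) +
      (s * (4 + 2 * k4) + 8 * (2 * n * r + s * (2 + L))) ≤
    (3200 * (4 + k5) + 8 * (k4 + 1) + (4 + 2 * k4) + 104) * (s * lam ^ 2) := by
  have hl : lam ≤ lam ^ 2 := by rw [sq]; exact le_mul_of_one_le_right (by linarith) hlam1
  have hl2 : 1 ≤ lam ^ 2 := hlam1.trans hl
  have hsl : s ≤ s * lam ^ 2 := le_mul_of_one_le_right hs0 hl2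
  have t1 : n * (2 * α * (4 * lam + k5)) ≤ 3200 * (4 + k5) * (s * lam ^ 2) := by
    have h4 : n * (2 * α * (4 * lam + k5)) = 3200 * s * (4 * lam ^ 2 + k5 * lam) := by
      rw [hα, ← hnr]; ring
    rw [h4]
    calc 3200 * s * (4 * lam ^ 2 + k5 * lam) ≤ 3200 * s * (4 * lam ^ 2 + k5 * lam ^ 2) := by gcongr
      _ = _ := by ring
  have t2 : n * (8 * (k4 + 1) * E) ≤ 8 * (k4 + 1) * (s * lam ^ 2) := by
    calc n * (8 * (k4 + 1) * E) = 8 * (k4 + 1) * (n * E) := by ring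
      _ ≤ 8 * (k4 + 1) * (s * lam ^ 2) :=
        mul_le_mul_of_nonneg_left (by linarith) (by linarith)
  have t3 : s * (4 + 2 * k4) ≤ (4 + 2 * k4) * (s * lam ^ 2) := by
    rw [mul_comm]; exact mul_le_mul_of_nonneg_left hsl (by linarith)
  have t4 : 8 * (2 * n * r + s * (2 + L)) ≤ 104 * (s * lam ^ 2) := by
    have h1 : s * (2 + L) ≤ s * (9 + lam ^ 2) := mul_le_mul_of_nonneg_left (by linarith) hs0
    have h2 : s * (9 + lam ^ 2) = 9 * s + s * lam ^ 2 := by ring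
    have e : 2 * n * r = 2 * s := by rw [mul_assoc, hnr]
    rw [e]
    linarith
  have e1 : n * (2 * α * (4 * lam + k5) + 8 * (k4 + 1) * E) =
    n * (2 * α * (4 * lam + k5)) + n * (8 * (k4 + 1) * E) := by ring
  have e2 : (3200 * (4 + k5) + 8 * (k4 + 1) + (4 + 2 * k4) + 104) * (s * lam ^ 2) =
    3200 * (4 + k5) * (s * lam ^ 2) + 8 * (k4 + 1) * (s * lam ^ 2) +
      (4 + 2 * k4) * (s * lam ^ 2) + 104 * (s * lam ^ 2) := by ring
  rw [e1, e2]
  linarith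

set_option maxHeartbeats 1000000 in
lemma risk_bound {n s : ℕ} (hs : 1 ≤ s) (hsn : (s : ℝ) ≤ 1 / 40960000 * n)
    (hlogs : Real.log n ≤ s) {αn : ℝ} (hαn : 0 < αn)
    (hαn2 : αn ≤ 1600 * ((s : ℝ) / n) * √(Real.log ((n : ℝ) / s)))
    (hahat : (Fin n → ℝ) → ℝ) (hM : IsMMLE cauchyDen αn hahat) (θ : Fin n → ℝ) (hθ : θ ∈ ell0 n s) :
    postRisk cauchyDen hahat θ ≤ C0 * (s * Real.log ((n : ℝ) / s)) := by
  have hs0 : (0:ℝ) < s := by exact_mod_cast hs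
  have hs1 : (1:ℝ) ≤ s := by exact_mod_cast hs
  have hn0 : (0:ℝ) < n := by linarith
  set r : ℝ := (s : ℝ) / n with hrdef
  have hr : 0 < r := by positivity
  have hnr : (n : ℝ) * r = s := by rw [hrdef]; field_simp
  have hrc : r ≤ 1 / 40960000 := by rw [hrdef, div_le_iff₀ hn0]; exact hsn
  have hinv : (n : ℝ) / s = r⁻¹ := by rw [hrdef, inv_div]
  rw [hinv] at hαn2 ⊢
  set lam := √(Real.log r⁻¹) with hlam
  have hrinv : 40960000 ≤ r⁻¹ := by
    rw [le_inv_comm₀ (by norm_num) hr]; linarith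
  have hlog1 : 1 ≤ Real.log r⁻¹ := by
    rw [Real.le_log_iff_exp_le (by positivity)]
    linarith [Real.exp_one_lt_d9]
  have hlam2 : lam ^ 2 = Real.log r⁻¹ := Real.sq_sqrt (by linarith)
  have hlam1 : 1 ≤ lam := by rw [hlam, Real.one_le_sqrt]; exact hlog1
  have hexp : Real.exp (lam ^ 2) = r⁻¹ := by rw [hlam2, Real.exp_log (by positivity)]
  have hE : 16 ≤ Real.exp (lam ^ 2) := by rw [hexp]; linarith
  set α := 1600 * r * lam with hαdef
  have hα : 0 < α := by positivity
  have hrα : r ≤ α := by rw [hαdef]; nlinarith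
  have hαE : 1 ≤ α * Real.exp (lam ^ 2) := by
    rw [hexp, ← div_eq_mul_inv, one_le_div hr]; exact hrα
  have hα2E : 1 ≤ 2 * α * Real.exp (lam ^ 2) := by nlinarith [Real.exp_pos (lam ^ 2)]
  have hα1 : 2 * α ≤ 1 / 2 := by
    have h1 : lam ^ 2 ≤ r⁻¹ := by
      rw [hlam2]
      exact (Real.log_le_sub_one_of_pos (by positivity)).trans (by linarith)
    have h2 : (r * lam) ^ 2 ≤ (1 / 6400) ^ 2 := by
      calc (r * lam) ^ 2 = r ^ 2 * lam ^ 2 := by ring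
        _ ≤ r ^ 2 * r⁻¹ := by gcongr
        _ = r := by field_simp
        _ ≤ _ := by norm_num at hrc ⊢; exact hrc
    have h3 := abs_le_of_sq_le_sq h2 (by norm_num)
    have h4 : r * lam ≤ 1 / 6400 := (le_abs_self _).trans h3
    have h5 : 2 * α = 3200 * (r * lam) := by rw [hαdef]; ring
    rw [h5]
    linarith
  -- cardinalities
  set N := (Finset.univ.filter fun i => θ i = 0) with hN
  set S := (Finset.univ.filter fun i => ¬ θ i = 0) with hS
  have hScard : S.card ≤ s := by
    have h : Nat.card {i : Fin n // θ i ≠ 0} ≤ s := hθ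
    rw [Nat.card_eq_fintype_card, Fintype.card_subtype] at h
    exact h
  have hNS : N.card + S.card = n := by
    have := Finset.card_filter_add_card_filter_not (s := (Finset.univ : Finset (Fin n))) (fun i => θ i = 0)
    simpa using this
  have hScardR : (S.card : ℝ) ≤ s := by exact_mod_cast hScard
  have hNSR : (N.card : ℝ) + S.card = n := by exact_mod_cast hNS
  have hNn : (N.card : ℝ) ≤ n := by have : (0:ℝ) ≤ S.card := by positivity
                                    linarith
  have hNhalf : (n : ℝ) / 2 ≤ N.card := by linarith
  have hK4 := K4_nonneg
  have hK5 := K5_nonneg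
  -- the dominating function
  let H : (Fin n → ℝ) → ℝ := fun X =>
      ∑ i ∈ N, (nm (2 * α) (X i) + qd (X i) * ∏ k, Rr α (X k)) +
      (∑ i ∈ S, (4 * (X i - θ i) ^ 2 + 2 * K4) +
        8 * (2 * n * r + S.card * (2 + Real.log (8 / r))))
  have hFH : ∀ X, ∫ u, (∑ i, (u i - θ i) ^ 2) ∂(post cauchyDen n (hahat X) X) ≤ H X := by
    intro X
    obtain ⟨hmem, hmax⟩ := hM.2 X
    apply pointwise_bound X θ (lt_of_lt_of_le hαn hmem.1) hmem.2 hr (by linarith) hα hα1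
    · intro h
      exact hmax r ⟨hmem.1.trans h.le, by linarith⟩
    · intro h
      exact hmax α ⟨hαn2, by linarith⟩
  have hPprob : IsProbabilityMeasure (Pdata n θ) := by unfold Pdata; infer_instance
  have hnull : ∀ i ∈ N, Integrable (fun X : Fin n → ℝ => nm (2 * α) (X i)) (Pdata n θ) ∧
      ∫ X, nm (2 * α) (X i) ∂(Pdata n θ) ≤ 2 * α * (4 * lam + K5) := by
    intro i hi
    have hz : θ i = 0 := (Finset.mem_filter.mp hi).2
    have h := coord_integral θ i (nm (2 * α)) (by rw [hz]; exact integrable_nm (by linarith))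
    refine ⟨h.1, ?_⟩
    rw [h.2, hz]
    exact integral_nm (by linarith) (by linarith) hα2E
  have hbad : ∀ i ∈ N, _ := fun i hi =>
    bad_event θ hα (by linarith) hlam1 hE hαE i (Finset.mem_filter.mp hi).2
  have hsig : ∀ i ∈ S, Integrable (fun X : Fin n → ℝ => 4 * (X i - θ i) ^ 2 + 2 * K4) (Pdata n θ) ∧
      ∫ X, (4 * (X i - θ i) ^ 2 + 2 * K4) ∂(Pdata n θ) = 4 + 2 * K4 := by
    intro i _
    have hi := (signal_noise (θ i)).1.const_mul 4
    have h := coord_integral θ i (fun x => 4 * (x - θ i) ^ 2 + 2 * K4) (hi.add (integrable_const _))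
    refine ⟨h.1, ?_⟩
    rw [h.2, integral_add hi (integrable_const _), integral_const_mul, (signal_noise (θ i)).2]
    simp
  have hI1 : ∀ i ∈ N, Integrable (fun X : Fin n → ℝ => nm (2 * α) (X i) + qd (X i) * ∏ k, Rr α (X k))
      (Pdata n θ) := fun i hi => (hnull i hi).1.add (hbad i hi).1
  have hI1s := integrable_finsetSum N hI1
  have hI2s := integrable_finsetSum S (fun i hi => (hsig i hi).1)
  have hI3 : Integrable (fun X : Fin n → ℝ => ∑ i ∈ S, (4 * (X i - θ i) ^ 2 + 2 * K4) +
        8 * (2 * n * r + S.card * (2 + Real.log (8 / r)))) (Pdata n θ) :=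
    hI2s.add (integrable_const _)
  have hHint : Integrable H (Pdata n θ) := hI1s.add hI3
  have hstep : postRisk cauchyDen hahat θ ≤ ∫ X, H X ∂(Pdata n θ) := by
    unfold postRisk
    apply integral_mono_of_nonneg _ hHint (Filter.Eventually.of_forall hFH)
    exact Filter.Eventually.of_forall fun X => integral_nonneg fun u =>
      Finset.sum_nonneg fun i _ => sq_nonneg _
  -- the bad-event factor
  set ρ := 1 - α / (400 * lam) with hρ
  have hρval : α / (400 * lam) = 4 * r := by rw [hαdef]; field_simp; ring
  have hfac : ρ ^ N.card * 2 ^ S.card ≤ Real.exp (-(s : ℝ)) := by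
    have hρ0 : 0 ≤ ρ := by rw [hρ, hρval]; linarith
    have h1 : ρ ≤ Real.exp (-(4 * r)) := by
      rw [hρ, hρval]; linarith [Real.add_one_le_exp (-(4 * r))]
    have h2 : ρ ^ N.card ≤ Real.exp (-(2 * s)) := by
      calc ρ ^ N.card ≤ Real.exp (-(4 * r)) ^ N.card := pow_le_pow_left₀ hρ0 h1 _
        _ = Real.exp (N.card * -(4 * r)) := by rw [Real.exp_nat_mul]
        _ ≤ _ := by
          apply Real.exp_le_exp.mpr
          nlinarith [mul_le_mul_of_nonneg_right hNhalf hr.le]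
    have h3 : (2:ℝ) ^ S.card ≤ Real.exp s := by
      calc (2:ℝ) ^ S.card ≤ Real.exp 1 ^ S.card := by
            apply pow_le_pow_left₀ (by norm_num)
            linarith [Real.add_one_le_exp (1:ℝ)]
        _ = Real.exp S.card := by rw [← Real.exp_nat_mul, mul_one]
        _ ≤ _ := Real.exp_le_exp.mpr hScardR
    calc ρ ^ N.card * 2 ^ S.card ≤ Real.exp (-(2 * s)) * Real.exp s := by gcongr
      _ = _ := by rw [← Real.exp_add]; congr 1; ring
  have hnexp : (n : ℝ) * Real.exp (-(s : ℝ)) ≤ 1 := by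
    have : (n : ℝ) ≤ Real.exp s := by rwa [← Real.log_le_iff_le_exp hn0]
    rw [Real.exp_neg, ← div_eq_mul_inv, div_le_one (Real.exp_pos _)]
    exact this
  have hHval : ∫ X, H X ∂(Pdata n θ) ≤
      n * (2 * α * (4 * lam + K5) + 8 * (K4 + 1) * Real.exp (-(s : ℝ))) +
      (s * (4 + 2 * K4) + 8 * (2 * n * r + s * (2 + Real.log (8 / r)))) := by
    have hL : 0 ≤ Real.log (8 / r) := by
      apply Real.log_nonneg
      rw [le_div_iff₀ hr]; linarith
    simp only [H]
    rw [integral_add hI1s hI3, integral_add hI2s (integrable_const _), integral_finsetSum N hI1,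
      integral_finsetSum S (fun i hi => (hsig i hi).1)]
    have hA : ∑ i ∈ N, ∫ X, (nm (2 * α) (X i) + qd (X i) * ∏ k, Rr α (X k)) ∂(Pdata n θ) ≤
        N.card * (2 * α * (4 * lam + K5) + 8 * (K4 + 1) * Real.exp (-(s : ℝ))) := by
      rw [← nsmul_eq_mul]
      apply Finset.sum_le_card_nsmul
      intro i hi
      rw [integral_add (hnull i hi).1 (hbad i hi).1]
      apply add_le_add (hnull i hi).2
      refine (hbad i hi).2.trans ?_
      gcongr
    have hB : ∑ i ∈ S, ∫ X, (4 * (X i - θ i) ^ 2 + 2 * K4) ∂(Pdata n θ) = S.card * (4 + 2 * K4) := by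
      rw [Finset.sum_congr rfl fun i hi => (hsig i hi).2, Finset.sum_const, nsmul_eq_mul]
    rw [hB]
    simp only [integral_const, probReal_univ, one_smul]
    refine add_le_add (hA.trans ?_) ?_
    · gcongr
    · gcongr
  refine hstep.trans (hHval.trans ?_)
  have hlog8 : Real.log (8 / r) ≤ 7 + lam ^ 2 := by
    rw [div_eq_mul_inv, Real.log_mul (by norm_num) (by positivity), hlam2]
    have := Real.log_le_sub_one_of_pos (show (0:ℝ) < 8 by norm_num)
    linarith
  have hl2 : 1 ≤ lam ^ 2 := by rw [hlam2]; exact hlog1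
  rw [← hlam2]
  exact final_numeric hs0.le hs1 hlam1 hK4 hK5 hnr hαdef hlog8 hnexp

lemma first_part {n s : ℕ} (hn : 8 * K4 ≤ 2 * Real.log n) (hn1 : 1 ≤ Real.log n)
    (hsn : (s : ℝ) ≤ 1 / 40960000 * n) (hls : Real.log n ^ 2 ≤ s)
    {t : ℝ → ℝ} (ht : IsThreshold cauchyDen t) {αn : ℝ} (hα : αn ∈ Set.Ioo (0 : ℝ) 1)
    (htα : t αn = √(2 * Real.log n))
    (hahat : (Fin n → ℝ) → ℝ) (hM : IsMMLE cauchyDen αn hahat) (θ : Fin n → ℝ) (hθ : θ ∈ ell0 n s) :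
    postRisk cauchyDen hahat θ ≤ C0 * (s * Real.log ((n : ℝ) / s)) := by
  have hs1 : (1:ℝ) ≤ s := le_trans (by nlinarith) hls
  have hs : 1 ≤ s := by exact_mod_cast hs1
  have hn0 : (0:ℝ) < n := by linarith
  have hlogs : Real.log n ≤ s := le_trans (by nlinarith) hls
  obtain ⟨htp, hmed⟩ := ht αn hα
  have hmz := (hmed (t αn)).mpr (le_of_eq (abs_of_pos htp))
  have hsq : (t αn) ^ 2 = 2 * Real.log n := by rw [htα, Real.sq_sqrt (by linarith)]
  have hb := alphan_bound hα.1 hα.2.le htp (by rw [hsq]; exact hn) hmz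
  rw [hsq] at hb
  have e : Real.exp (-(2 * Real.log n) / 2) = (n : ℝ)⁻¹ := by
    rw [show -(2 * Real.log n) / 2 = -Real.log n by ring, Real.exp_neg, Real.exp_log hn0]
  rw [neg_div] at hb
  rw [neg_div] at e
  rw [e] at hb
  apply risk_bound hs hsn hlogs hα.1 _ hahat hM θ hθ
  have hl : 1 ≤ √(Real.log ((n : ℝ) / s)) := by
    rw [Real.one_le_sqrt, Real.le_log_iff_exp_le (by positivity), le_div_iff₀ (by linarith)]
    have := Real.exp_one_lt_d9
    nlinarith
  calc αn ≤ 12 * (2 + 2 * Real.log n) * (n : ℝ)⁻¹ := hb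
    _ ≤ 1600 * s * (n : ℝ)⁻¹ := 
        mul_le_mul_of_nonneg_right (by linarith) (by positivity)
    _ = 1600 * ((s : ℝ) / n) * 1 := by ring
    _ ≤ _ := by gcongr

lemma large_n : ∃ N0 : ℕ, 0 < N0 ∧ ∀ n : ℕ, N0 ≤ n → 8 * K4 ≤ 2 * Real.log n ∧ 1 ≤ Real.log n ∧
    2 * Real.log n ^ 2 ≤ 1 / 40960000 * n := by
  have h1 : Filter.Tendsto (fun n : ℕ => Real.log n) Filter.atTop Filter.atTop :=
    Real.tendsto_log_atTop.comp tendsto_natCast_atTop_atTop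
  have h2 := h1.eventually_ge_atTop (max (4 * K4) 1)
  have h3 : ∀ᶠ n : ℕ in Filter.atTop, 2 * Real.log n ^ 2 ≤ 1 / 40960000 * n := by
    have := (isLittleO_pow_log_id_atTop (n := 2)).def (show (0:ℝ) < 1 / 81920000 by norm_num)
    have := tendsto_natCast_atTop_atTop (R := ℝ) |>.eventually this
    filter_upwards [this] with n hn
    simp only [id, Real.norm_eq_abs] at hn
    rw [abs_of_nonneg (sq_nonneg _), abs_of_nonneg (Nat.cast_nonneg n)] at hn
    linarith
  obtain ⟨N, hN⟩ := Filter.eventually_atTop.mp (h2.and h3)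
  refine ⟨N + 1, Nat.succ_pos _, fun n hn => ?_⟩
  obtain ⟨ha, hb⟩ := hN n (by omega)
  have := le_max_left (4 * K4) 1
  have := le_max_right (4 * K4) 1
  exact ⟨by linarith, by linarith, hb⟩

/-- Theorem 3: optimal rate for the EB spike and Cauchy slab.
There exist `C, N₀, c₀, c₁ > 0` such that for `n ≥ N₀` and
`c₁ log² n ≤ s ≤ c₀ n` the complete empirical Bayes posterior squared
`L²`-moment is at most `C ⬝ 2 s log(n/s)` uniformly over `ℓ₀[s]`; assuming only
`s ≤ c₀ n` the bound `C ⬝ 2 s log(n/s) + C log³ n` holds. -/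
theorem cauchy_slab_optimal_rate :
    ∃ C > (0 : ℝ), ∃ N0 : ℕ, 0 < N0 ∧ ∃ c0 > (0 : ℝ), ∃ c1 > (0 : ℝ),
      ∀ n : ℕ, N0 ≤ n → ∀ s : ℕ, (s : ℝ) ≤ c0 * n →
      ∀ t : ℝ → ℝ, IsThreshold cauchyDen t →
      ∀ αn : ℝ, αn ∈ Set.Ioo (0 : ℝ) 1 → t αn = Real.sqrt (2 * Real.log n) →
      ∀ hahat : (Fin n → ℝ) → ℝ, IsMMLE cauchyDen αn hahat →
      ∀ θ0 ∈ ell0 n s,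
        (c1 * (Real.log n) ^ 2 ≤ (s : ℝ) →
          postRisk cauchyDen hahat θ0 ≤ C * (2 * s * Real.log ((n : ℝ) / s))) ∧
        postRisk cauchyDen hahat θ0 ≤
          C * (2 * s * Real.log ((n : ℝ) / s)) + C * (Real.log n) ^ 3 := by
  obtain ⟨N0, hN0, hN⟩ := large_n
  have hC := C0_pos
  refine ⟨2 * C0, by linarith, N0, hN0, 1 / 40960000, by norm_num, 1, by norm_num, ?_⟩
  intro n hn s hsn t ht αn hα htα hahat hM θ0 hθ
  obtain ⟨hK, h1, h2⟩ := hN n hn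
  have hn0 : (0:ℝ) < n := by nlinarith
  have hnn : (0:ℝ) ≤ s * Real.log ((n : ℝ) / s) := by
    rcases Nat.eq_zero_or_pos s with h | h
    · simp [h]
    · have hs0 : (0:ℝ) < s := by exact_mod_cast h
      apply mul_nonneg hs0.le
      apply Real.log_nonneg
      rw [one_le_div hs0]
      linarith
  have hfirst : 1 * (Real.log n) ^ 2 ≤ (s : ℝ) →
      postRisk cauchyDen hahat θ0 ≤ 2 * C0 * (2 * s * Real.log ((n : ℝ) / s)) := by
    intro hls
    have := first_part hK h1 hsn (by linarith) ht hα htα hahat hM θ0 hθ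
    nlinarith [mul_nonneg hC.le hnn]
  refine ⟨hfirst, ?_⟩
  have hl3 : 0 ≤ 2 * C0 * Real.log n ^ 3 := by positivity
  rcases le_or_gt (1 * (Real.log n) ^ 2) (s : ℝ) with hls | hls
  · linarith [hfirst hls]
  · set s' := ⌈Real.log n ^ 2⌉₊ with hs'
    have hle : Real.log n ^ 2 ≤ s' := Nat.le_ceil _
    have hlt : (s' : ℝ) < Real.log n ^ 2 + 1 := Nat.ceil_lt_add_one (by positivity)
    have hs1 : 1 ≤ Real.log n ^ 2 := by nlinarith
    have hss : s ≤ s' := by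
      have : (s : ℝ) ≤ s' := by linarith
      exact_mod_cast this
    have hmem : θ0 ∈ ell0 n s' := le_trans hθ hss
    have h := first_part hK h1 (by linarith) hle ht hα htα hahat hM θ0 hmem
    have hs'0 : (0:ℝ) < s' := by linarith
    have hlog : Real.log ((n : ℝ) / s') ≤ Real.log n := by
      apply Real.log_le_log (by positivity)
      apply div_le_self hn0.le
      linarith
    have hb : (s' : ℝ) * Real.log ((n : ℝ) / s') ≤ 2 * Real.log n ^ 2 * Real.log n :=
      (mul_le_mul_of_nonneg_left hlog hs'0.le).trans
        (mul_le_mul_of_nonneg_right (by linarith) (by linarith))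
    have hb2 := mul_le_mul_of_nonneg_left hb hC.le
    have h3 := mul_nonneg hC.le hnn
    nlinarith

end
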